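/- Let (τ*, n*) be an optimal solution of the linear program (LP). Then for every i ∈ {1, …, m} one has n*(i) = max(τ* − N_i, 0). -/

import Mathlib

open Finset

/-- Let `(τstar, nstar)` be an optimal solution of the linear program (LP):
maximize `τ` over `τ ≥ 0`, `n i ≥ 0` subject to `τ ≤ N i + n i` for all `i` and `∑ i, n i ≤ Q`.
Then for every `i`, `nstar i = max (τstar - N i) 0`. -/
theorem lp_optimal_solution_eq_waterfill
    (m : ℕ) (hm : 1 ≤ m) (N : Fin m → ℝ) (hN : ∀ i, 0 ≤ N i)
    (Q : ℝ) (hQ : 0 ≤ Q)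
    (τstar : ℝ) (nstar : Fin m → ℝ)
    (hfeas : 0 ≤ τstar ∧ (∀ i, 0 ≤ nstar i) ∧ (∀ i, τstar ≤ N i + nstar i) ∧
      ∑ i, nstar i ≤ Q)
    (hopt : ∀ τ : ℝ, ∀ n : Fin m → ℝ,
      (0 ≤ τ ∧ (∀ i, 0 ≤ n i) ∧ (∀ i, τ ≤ N i + n i) ∧ ∑ i, n i ≤ Q) → τ ≤ τstar) :
    ∀ i, nstar i = max (τstar - N i) 0 := by
  obtain ⟨h0, h1, h2, h3⟩ := hfeas
  have hle : ∀ i, max (τstar - N i) 0 ≤ nstar i := fun i =>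
    max_le (by linarith [h2 i]) (h1 i)
  intro j
  by_contra hne
  have hm' : (0 : ℝ) < m := by exact_mod_cast hm
  have hd : 0 < nstar j - max (τstar - N j) 0 :=
    sub_pos.mpr (lt_of_le_of_ne (hle j) (Ne.symm hne))
  set δ := nstar j - max (τstar - N j) 0 with hδ
  have hdm : 0 < δ / m := div_pos hd hm'
  have hsum : δ ≤ ∑ i, (nstar i - max (τstar - N i) 0) :=
    Finset.single_le_sum (f := fun i => nstar i - max (τstar - N i) 0)
      (fun i _ => sub_nonneg.mpr (hle i)) (Finset.mem_univ j)
  rw [Finset.sum_sub_distrib] at hsum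
  have key := hopt (τstar + δ / m) (fun i => max (τstar - N i) 0 + δ / m) ⟨by linarith,
    fun i => by
      have := le_max_right (τstar - N i) 0
      show 0 ≤ max (τstar - N i) 0 + δ / m
      linarith,
    fun i => by
      have := le_max_left (τstar - N i) 0
      show τstar + δ / m ≤ N i + (max (τstar - N i) 0 + δ / m)
      linarith,
    by
      have hc : ∑ _i : Fin m, δ / (m : ℝ) = δ := by
        rw [Finset.sum_const, Finset.card_univ, Fintype.card_fin, nsmul_eq_mul]
        field_simp
      rw [Finset.sum_add_distrib, hc]
      linarith⟩
  linarith
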